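/- If H is a 3-uniform hypergraph that is 2-regular (every vertex has degree exactly 2), then τ_g(H) ≤ (3/4) m(H). -/

import Mathlib

variable {V : Type} [Fintype V] [DecidableEq V]

/-- The set of legal moves in the transversal game with uncovered edge set `E`:
the vertices hitting at least one uncovered edge. -/
def playable (E : Finset (Finset V)) : Finset V :=
  Finset.univ.filter (fun v => ∃ e ∈ E, v ∈ e)

/-- The number of moves remaining in the transversal game with uncovered edge set `E`
under optimal play, where `ehTurn = true` iff Edge-hitter (the minimizer) moves next;
Staller (the maximizer) moves next iff `ehTurn = false`.  Each move must hit at least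
one uncovered edge, and the game ends when no uncovered edge remains. -/
def gameVal (ehTurn : Bool) (E : Finset (Finset V)) : ℕ :=
  if h : (playable E).Nonempty then
    1 +
      (if ehTurn then
        (playable E).attach.inf' (Finset.attach_nonempty_iff.mpr h)
          (fun v => gameVal (!ehTurn) (E.filter (fun e => v.1 ∉ e)))
      else
        (playable E).attach.sup' (Finset.attach_nonempty_iff.mpr h)
          (fun v => gameVal (!ehTurn) (E.filter (fun e => v.1 ∉ e))))
  else 0
termination_by E.card
decreasing_by
  all_goals
    obtain ⟨v, hv⟩ := v
    simp only [playable, Finset.mem_filter, Finset.mem_univ, true_and] at hv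
    obtain ⟨e, he, hve⟩ := hv
    exact Finset.card_lt_card (Finset.filter_ssubset.mpr ⟨e, he, by simp [hve]⟩)

/-- The game transversal number `τ_g`: Edge-hitter makes the first move. -/
def gameTransversalNum (E : Finset (Finset V)) : ℕ := gameVal true E

/-- The Staller-start game transversal number `τ_g'`: Staller makes the first move. -/
def stallerGameTransversalNum (E : Finset (Finset V)) : ℕ := gameVal false E

/-- The transversal number `τ`: the minimum size of a set of vertices meeting all edges. -/
noncomputable def transversalNum (E : Finset (Finset V)) : ℕ :=
  sInf {n | ∃ T : Finset V, (∀ e ∈ E, ∃ v ∈ T, v ∈ e) ∧ T.card = n}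

/-- Vertices of degree two. -/
def degTwo (E : Finset (Finset V)) : Finset V :=
  Finset.univ.filter (fun v => (E.filter (fun e => v ∈ e)).card = 2)

theorem mem_degTwo {E : Finset (Finset V)} {v : V} :
    v ∈ degTwo E ↔ (E.filter (fun e => v ∈ e)).card = 2 := by
  simp [degTwo]

theorem mem_playable {E : Finset (Finset V)} {v : V} :
    v ∈ playable E ↔ ∃ e ∈ E, v ∈ e := by
  simp [playable]

theorem gameVal_of_not (b : Bool) {E : Finset (Finset V)} (h : ¬ (playable E).Nonempty) :
    gameVal b E = 0 := by
  rw [gameVal, dif_neg h]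

theorem gameVal_true_le {E : Finset (Finset V)} {v : V} (hv : v ∈ playable E) :
    gameVal true E ≤ 1 + gameVal false (E.filter (fun e => v ∉ e)) := by
  rw [gameVal, dif_pos ⟨v, hv⟩]
  simp only [if_true]
  exact Nat.add_le_add_left
    (Finset.inf'_le (fun v : {x // x ∈ playable E} =>
      gameVal (!true) (E.filter (fun e => v.1 ∉ e))) (Finset.mem_attach _ ⟨v, hv⟩)) 1

theorem gameVal_false_le {E : Finset (Finset V)} (h : (playable E).Nonempty) :
    ∃ v ∈ playable E, gameVal false E = 1 + gameVal true (E.filter (fun e => v ∉ e)) := by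
  obtain ⟨⟨v, hv⟩, -, hh⟩ := Finset.exists_mem_eq_sup' (Finset.attach_nonempty_iff.mpr h)
    (fun v : {x // x ∈ playable E} => gameVal (!false) (E.filter (fun e => v.1 ∉ e)))
  refine ⟨v, hv, ?_⟩
  rw [gameVal, dif_pos h]
  simp only [Bool.false_eq_true, if_false]
  rw [hh]
  rfl

theorem card_split (E : Finset (Finset V)) (v : V) :
    (E.filter (fun e => v ∈ e)).card + (E.filter (fun e => v ∉ e)).card = E.card :=
  Finset.card_filter_add_card_filter_not (fun e => v ∈ e)

theorem playable_pos {E : Finset (Finset V)} {v : V} (hv : v ∈ playable E) :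
    0 < (E.filter (fun e => v ∈ e)).card := by
  obtain ⟨e, he, hve⟩ := mem_playable.1 hv
  exact Finset.card_pos.2 ⟨e, by simp [he, hve]⟩

theorem degTwo_playable {E : Finset (Finset V)} {v : V} (hv : v ∈ degTwo E) :
    v ∈ playable E := by
  have h := mem_degTwo.1 hv
  obtain ⟨e, he⟩ := Finset.card_pos.1 (show 0 < (E.filter (fun e => v ∈ e)).card by omega)
  rw [Finset.mem_filter] at he
  exact mem_playable.2 ⟨e, he⟩

theorem degTwo_card_le (E : Finset (Finset V)) (v : V) :
    (degTwo E).card ≤ (degTwo (E.filter (fun e => v ∉ e))).card +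
      (degTwo E ∩ (E.filter (fun e => v ∈ e)).biUnion id).card := by
  refine le_trans (Finset.card_le_card ?_) (Finset.card_union_le _ _)
  intro x hx
  rw [Finset.mem_union]
  by_cases hb : x ∈ (E.filter (fun e => v ∈ e)).biUnion id
  · exact Or.inr (Finset.mem_inter.2 ⟨hx, hb⟩)
  · left
    rw [mem_degTwo] at hx ⊢
    rw [← hx, Finset.filter_filter]
    congr 1
    apply Finset.filter_congr
    intro e he
    constructor
    · exact fun h => h.2
    · refine fun h => ⟨fun hv => hb ?_, h⟩
      exact Finset.mem_biUnion.2 ⟨e, Finset.mem_filter.2 ⟨he, hv⟩, h⟩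

theorem lost_one {E : Finset (Finset V)} (h3 : ∀ e ∈ E, e.card = 3) {v : V}
    (hv : (E.filter (fun e => v ∈ e)).card = 1) :
    (degTwo E ∩ (E.filter (fun e => v ∈ e)).biUnion id).card ≤ 2 := by
  obtain ⟨A, hA⟩ := Finset.card_eq_one.1 hv
  have hAm : A ∈ E.filter (fun e => v ∈ e) := by simp [hA]
  rw [Finset.mem_filter] at hAm
  have hc : (A.erase v).card = 2 := by
    rw [Finset.card_erase_of_mem hAm.2, h3 A hAm.1]
  rw [← hc]
  apply Finset.card_le_card
  intro x hx
  rw [hA] at hx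
  simp only [Finset.singleton_biUnion, id, Finset.mem_inter] at hx
  refine Finset.mem_erase.2 ⟨?_, hx.2⟩
  rintro rfl
  have := mem_degTwo.1 hx.1
  omega

theorem union_le_five {E : Finset (Finset V)} (h3 : ∀ e ∈ E, e.card = 3) {v : V}
    (hv : (E.filter (fun e => v ∈ e)).card = 2) :
    ((E.filter (fun e => v ∈ e)).biUnion id).card ≤ 5 := by
  obtain ⟨A, B, hAB, hE⟩ := Finset.card_eq_two.1 hv
  have hAm : A ∈ E.filter (fun e => v ∈ e) := by simp [hE]
  have hBm : B ∈ E.filter (fun e => v ∈ e) := by simp [hE]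
  rw [Finset.mem_filter] at hAm hBm
  rw [hE]
  have h1 := Finset.card_union_add_card_inter A B
  have h2 : 0 < (A ∩ B).card := Finset.card_pos.2 ⟨v, by simp [hAm.2, hBm.2]⟩
  have h4 := h3 A hAm.1
  have h5 := h3 B hBm.1
  simp only [Finset.biUnion_insert, Finset.singleton_biUnion, id]
  omega

theorem double_count (E : Finset (Finset V)) :
    2 * (degTwo E).card = ∑ A ∈ E, (degTwo E ∩ A).card := by
  have h := Finset.sum_card_bipartiteAbove_eq_sum_card_bipartiteBelow
    (s := degTwo E) (t := E) (fun v A => v ∈ A)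
  have h1 : ∑ v ∈ degTwo E, (Finset.bipartiteAbove (fun v A => v ∈ A) E v).card
      = 2 * (degTwo E).card := by
    unfold Finset.bipartiteAbove
    rw [Finset.sum_congr rfl (fun v hv => mem_degTwo.1 hv), Finset.sum_const, smul_eq_mul,
      mul_comm]
  rw [← h1, h]
  apply Finset.sum_congr rfl
  intro A _
  rw [Finset.bipartiteBelow, Finset.filter_mem_eq_inter]

theorem good_move {E : Finset (Finset V)} (h3 : ∀ e ∈ E, e.card = 3)
    (hne : (degTwo E).Nonempty) :
    ∃ v ∈ degTwo E,
      (degTwo E ∩ (E.filter (fun e => v ∈ e)).biUnion id).card ≤ 4 ∨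
      ((degTwo E ∩ (E.filter (fun e => v ∈ e)).biUnion id).card ≤ 5 ∧ 3 ∣ (degTwo E).card) := by
  by_cases hex : ∃ v ∈ degTwo E,
      (degTwo E ∩ (E.filter (fun e => v ∈ e)).biUnion id).card ≤ 4
  · obtain ⟨v, hv, h⟩ := hex
    exact ⟨v, hv, Or.inl h⟩
  · push Not at hex
    obtain ⟨v, hv⟩ := hne
    refine ⟨v, hv, Or.inr ⟨le_trans (Finset.card_le_card Finset.inter_subset_right)
      (union_le_five h3 (mem_degTwo.1 hv)), ?_⟩⟩
    have key : ∀ A ∈ E, 3 ∣ (degTwo E ∩ A).card := by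
      intro A hA
      rcases Finset.eq_empty_or_nonempty (degTwo E ∩ A) with h0 | ⟨x, hx⟩
      · simp [h0]
      · rw [Finset.mem_inter] at hx
        have hc := hex x hx.1
        have h5 := union_le_five h3 (mem_degTwo.1 hx.1)
        have heq := Finset.eq_of_subset_of_card_le
          (Finset.inter_subset_right (s₁ := degTwo E)
            (s₂ := (E.filter (fun e => x ∈ e)).biUnion id)) (by omega)
        have hsub : A ⊆ degTwo E := by
          intro y hy
          have hy' : y ∈ (E.filter (fun e => x ∈ e)).biUnion id :=
            Finset.mem_biUnion.2 ⟨A, Finset.mem_filter.2 ⟨hA, hx.2⟩, hy⟩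
          rw [← heq] at hy'
          exact (Finset.mem_inter.1 hy').1
        rw [Finset.inter_eq_right.2 hsub, h3 A hA]
    have hd : 3 ∣ 2 * (degTwo E).card := by
      rw [double_count]
      exact Finset.dvd_sum key
    omega

theorem gameVal_le_card (n : ℕ) : ∀ (b : Bool) (E : Finset (Finset V)), E.card ≤ n →
    gameVal b E ≤ E.card := by
  induction n with
  | zero =>
    intro b E hE
    rw [gameVal_of_not]
    · exact Nat.zero_le _
    · rintro ⟨v, hv⟩
      have := playable_pos hv
      have := card_split E v
      omega
  | succ n ih =>
    intro b E hE
    by_cases hp : (playable E).Nonempty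
    · cases b
      · obtain ⟨v, hv, h⟩ := gameVal_false_le hp
        have h1 := playable_pos hv
        have h2 := card_split E v
        have h3 := ih true (E.filter (fun e => v ∉ e)) (by omega)
        omega
      · obtain ⟨v, hv⟩ := hp
        have h := gameVal_true_le hv
        have h1 := playable_pos hv
        have h2 := card_split E v
        have h3 := ih false (E.filter (fun e => v ∉ e)) (by omega)
        omega
    · rw [gameVal_of_not b hp]
      exact Nat.zero_le _

theorem deg_filter_le {E : Finset (Finset V)} (hd : ∀ v, (E.filter (fun e => v ∈ e)).card ≤ 2)
    (w v : V) : ((E.filter (fun e => w ∉ e)).filter (fun e => v ∈ e)).card ≤ 2 :=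
  le_trans (Finset.card_le_card (Finset.filter_subset_filter _ (Finset.filter_subset _ _))) (hd v)

theorem main_bound (n : ℕ) : ∀ (E : Finset (Finset V)), E.card ≤ n →
    (∀ e ∈ E, e.card = 3) → (∀ v, (E.filter (fun e => v ∈ e)).card ≤ 2) →
    6 * gameVal true E + (degTwo E).card ≤ 6 * E.card := by
  induction n using Nat.strong_induction_on with
  | _ n ih =>
  intro E hE h3 hd
  rcases Finset.eq_empty_or_nonempty (degTwo E) with h0 | hne
  · have := gameVal_le_card E.card true E le_rfl
    rw [h0, Finset.card_empty]
    omega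
  · obtain ⟨v, hv, hl⟩ := good_move h3 hne
    have hv2 := mem_degTwo.1 hv
    have hs := card_split E v
    have hl' := degTwo_card_le E v
    have hg := gameVal_true_le (degTwo_playable hv)
    set E1 := E.filter (fun e => v ∉ e) with hE1
    have h31 : ∀ e ∈ E1, e.card = 3 := fun e he => h3 e (Finset.mem_filter.1 he).1
    have hd1 : ∀ w, (E1.filter (fun e => w ∈ e)).card ≤ 2 := deg_filter_le hd v
    by_cases hp : (playable E1).Nonempty
    · obtain ⟨w, hw, hgw⟩ := gameVal_false_le hp
      have hwpos := playable_pos hw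
      have hwle := hd1 w
      have hs1 := card_split E1 w
      have hlw := degTwo_card_le E1 w
      set E2 := E1.filter (fun e => w ∉ e) with hE2
      have hih := ih E2.card (by omega) E2 le_rfl
        (fun e he => h31 e (Finset.mem_filter.1 he).1) (deg_filter_le hd1 w)
      have hcase : (E1.filter (fun e => w ∈ e)).card = 1 ∨
          (E1.filter (fun e => w ∈ e)).card = 2 := by omega
      rcases hcase with h1 | h2
      · have := lost_one h31 h1
        omega
      · have h5 := union_le_five h31 h2
        have h6 := Finset.card_le_card (Finset.inter_subset_right (s₁ := degTwo E1)
            (s₂ := (E1.filter (fun e => w ∈ e)).biUnion id))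
        omega
    · have hz := gameVal_of_not false hp
      have he : degTwo E1 = ∅ := by
        by_contra hc
        obtain ⟨x, hx⟩ := Finset.nonempty_iff_ne_empty.2 hc
        exact hp ⟨x, degTwo_playable hx⟩
      rw [he, Finset.card_empty] at hl'
      omega

/-- If `H` is a `3`-uniform `2`-regular hypergraph, then `τ_g(H) ≤ (3/4) m(H)`. -/
theorem gameTransversalNum_le_of_three_uniform_two_regular
    {V : Type} [Fintype V] [DecidableEq V] (E : Finset (Finset V))
    (h3 : ∀ e ∈ E, e.card = 3)
    (hreg : ∀ v : V, (E.filter (fun e => v ∈ e)).card = 2) :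
    (gameTransversalNum E : ℚ) ≤ (3 / 4) * E.card := by
  have hm := main_bound E.card E le_rfl h3 (fun v => (hreg v).le)
  have hu : degTwo E = Finset.univ := by
    ext v
    simp [mem_degTwo, hreg v]
  have hdc := double_count E
  have hsum : ∑ A ∈ E, (degTwo E ∩ A).card = 3 * E.card := by
    rw [hu, Finset.sum_congr rfl (fun A hA => by rw [Finset.univ_inter, h3 A hA]),
      Finset.sum_const, smul_eq_mul, mul_comm]
  have hfin : 4 * gameTransversalNum E ≤ 3 * E.card := by
    unfold gameTransversalNum
    omega
  have : (4 : ℚ) * gameTransversalNum E ≤ 3 * E.card := by exact_mod_cast hfin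
  linarith
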